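/- Let c and c' be two cut-off functions (each compactly supported, continuous, [0,1]-valued, with ∑_γ c(zγ)² = 1 and ∑_γ c'(zγ)² = 1 for all z), let e be the Mishchenko projection built from c, and assume the nondegeneracy summation condition along c': for every x ∈ X and v ∈ H the family (π_x((γ·c')²)v)_{γ∈Γ} is unconditionally summable with sum v. Define φ_{c'←c}(ξ̂)(x,γ) = π_x(c')(𝒫^c ξ̂(x,γ)), where 𝒫^c ξ̂(x,γ) = ∑_{μ∈Γ} π_x(μ·c)(U_μ(ξ̂(μ⁻¹x, μ⁻¹γ))), and symmetrically φ_{c←c'}. Then for every ξ̂ ∈ C_c(X×Γ, H) and every (x,γ), the family (π_x(c)(π_x(μ·c')(U_μ(π_{μ⁻¹x}(c')(𝒫^c ξ̂(μ⁻¹x, μ⁻¹γ))))))_{μ∈Γ} is summable with sum ((π⋊Γ)(e)ξ̂)(x,γ) = ∑_{ν∈Γ} π_x(c·(ν·c))(U_ν(ξ̂(ν⁻¹x, ν⁻¹γ))); that is, φ_{c←c'} ∘ φ_{c'←c} = (π⋊Γ)(e) on C_c(X×Γ, H), so the identification of the Connes–Skandalis module with the range of the Mishchenko projection is independent of the choice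 of cut-off function. -/

import Mathlib

/-- The averaging map `𝒫^c` built from a cut-off function `c`:
`𝒫^c ξ̂(x,γ) = ∑_μ π_x(μ·c)(U_μ(ξ̂(μ⁻¹x, μ⁻¹γ)))`. -/
noncomputable def avgP {Γ X Z H : Type*} [Group Γ] [MulAction Γ X]
    [NormedAddCommGroup H] [InnerProductSpace ℂ H]
    (π : X → (Z → ℂ) → (H →L[ℂ] H)) (U : Γ →* (H ≃ₗᵢ[ℂ] H))
    (ρ : Z → Γ → Z) (c : Z → ℝ) (ξ : X → Γ → H) (x : X) (γ : Γ) : H :=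
  ∑' μ : Γ, π x (fun z => (c (ρ z μ) : ℂ)) (U μ (ξ (μ⁻¹ • x) (μ⁻¹ * γ)))

/-- The Mishchenko projection (built from `c`) acting on `C_c(X×Γ, H)`:
`((π⋊Γ)(e)ξ̂)(x,γ) = ∑_μ π_x(c·(μ·c))(U_μ(ξ̂(μ⁻¹x, μ⁻¹γ)))`. -/
noncomputable def mishAct {Γ X Z H : Type*} [Group Γ] [MulAction Γ X]
    [NormedAddCommGroup H] [InnerProductSpace ℂ H]
    (π : X → (Z → ℂ) → (H →L[ℂ] H)) (U : Γ →* (H ≃ₗᵢ[ℂ] H))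
    (ρ : Z → Γ → Z) (c : Z → ℝ) (ξ : X → Γ → H) (x : X) (γ : Γ) : H :=
  ∑' μ : Γ, π x (fun z => (c z : ℂ) * (c (ρ z μ) : ℂ)) (U μ (ξ (μ⁻¹ • x) (μ⁻¹ * γ)))

/-- Right translation by a group element preserves compact support. -/
theorem hasCompactSupport_comp_right_translation {Γ Z E : Type*} [Group Γ] [TopologicalSpace Z]
    [Zero E] (ρ : Z → Γ → Z) (hρ_one : ∀ z, ρ z 1 = z)
    (hρ_mul : ∀ (z : Z) (γ μ : Γ), ρ (ρ z γ) μ = ρ z (γ * μ))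
    (hρ_cont : ∀ γ : Γ, Continuous fun z => ρ z γ)
    {f : Z → E} (hf : HasCompactSupport f) (γ : Γ) :
    HasCompactSupport fun z => f (ρ z γ) := by
  let e : Z ≃ₜ Z :=
    { toFun := fun z => ρ z γ
      invFun := fun z => ρ z γ⁻¹
      left_inv := fun z => by simp [hρ_mul, hρ_one]
      right_inv := fun z => by simp [hρ_mul, hρ_one]
      continuous_toFun := hρ_cont γ
      continuous_invFun := hρ_cont γ⁻¹ }
  exact hf.comp_homeomorph e

section Equivariance

variable {Γ X Z H : Type*} [Group Γ] [MulAction Γ X]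
  [NormedAddCommGroup H] [InnerProductSpace ℂ H]
  {π : X → (Z → ℂ) → (H →L[ℂ] H)} {U : Γ →* (H ≃ₗᵢ[ℂ] H)} {ρ : Z → Γ → Z}

/-- The covariance relation, with the unitary moved past the representation. -/
theorem unitary_apply_equivariant_family
    (hρ_one : ∀ z, ρ z 1 = z)
    (hρ_mul : ∀ (z : Z) (γ μ : Γ), ρ (ρ z γ) μ = ρ z (γ * μ))
    (hπ_equiv : ∀ (γ : Γ) (x : X) (f : Z → ℂ) (v : H),
      π (γ • x) f v = U γ (π x (fun z => f (ρ z γ⁻¹)) (U γ⁻¹ v)))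
    (μ : Γ) (x : X) (f : Z → ℂ) (v : H) :
    U μ (π (μ⁻¹ • x) f v) = π x (fun z => f (ρ z μ)) (U μ v) := by
  have h := hπ_equiv μ (μ⁻¹ • x) (fun z => f (ρ z μ)) (U μ v)
  have hU : U μ⁻¹ (U μ v) = v := by
    rw [map_inv]
    exact (U μ).symm_apply_apply v
  simpa [hρ_mul, hρ_one, hU] using h.symm

/-- The values of `avgP` are equivariant. -/
theorem unitary_apply_avgP
    (hρ_one : ∀ z, ρ z 1 = z)
    (hρ_mul : ∀ (z : Z) (γ μ : Γ), ρ (ρ z γ) μ = ρ z (γ * μ))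
    (hπ_equiv : ∀ (γ : Γ) (x : X) (f : Z → ℂ) (v : H),
      π (γ • x) f v = U γ (π x (fun z => f (ρ z γ⁻¹)) (U γ⁻¹ v)))
    (c : Z → ℝ) (ξ : X → Γ → H) (μ : Γ) (x : X) (γ : Γ) :
    U μ (avgP π U ρ c ξ (μ⁻¹ • x) (μ⁻¹ * γ)) = avgP π U ρ c ξ x γ := by
  unfold avgP
  refine ((U μ).toContinuousLinearEquiv.map_tsum).trans
    ((tsum_congr fun ν => ?_).trans ((Equiv.mulLeft μ).tsum_eq _))
  have h := unitary_apply_equivariant_family hρ_one hρ_mul hπ_equiv μ x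
    (fun z => (c (ρ z ν) : ℂ)) (U ν (ξ (ν⁻¹ • μ⁻¹ • x) (ν⁻¹ * (μ⁻¹ * γ))))
  simpa [hρ_mul, mul_smul, mul_assoc] using h

end Equivariance

/-- Independence of the choice of cut-off function: with
`φ_{c'←c}(ξ̂)(x,γ) = π_x(c')(𝒫^c ξ̂(x,γ))` and symmetrically `φ_{c←c'}`, one has
`φ_{c←c'} ∘ φ_{c'←c} = (π⋊Γ)(e)` on `C_c(X×Γ, H)`, where `e` is the Mishchenko
projection built from `c`; the relevant families are summable with sum
`((π⋊Γ)(e)ξ̂)(x,γ)`. -/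
theorem cutoff_independence_of_mishchenko_identification
    {Γ : Type*} [Group Γ]
    {Z : Type*} [TopologicalSpace Z] [LocallyCompactSpace Z] [T2Space Z]
    {X : Type*} [TopologicalSpace X] [CompactSpace X] [T2Space X] [MulAction Γ X]
    {H : Type*} [NormedAddCommGroup H] [InnerProductSpace ℂ H] [CompleteSpace H]
    (ρ : Z → Γ → Z)
    (hρ_one : ∀ z, ρ z 1 = z)
    (hρ_mul : ∀ (z : Z) (γ μ : Γ), ρ (ρ z γ) μ = ρ z (γ * μ))
    (hρ_cont : ∀ γ : Γ, Continuous fun z => ρ z γ)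
    (hρ_proper : ∀ K L : Set Z, IsCompact K → IsCompact L →
      {γ : Γ | ∃ z ∈ K, ρ z γ ∈ L}.Finite)
    (hX_cont : ∀ γ : Γ, Continuous fun x : X => γ • x)
    (c : Z → ℝ) (hc_cont : Continuous c) (hc_supp : HasCompactSupport c)
    (hc_mem : ∀ z, c z ∈ Set.Icc (0 : ℝ) 1)
    (hc_sum : ∀ z, HasSum (fun γ : Γ => c (ρ z γ) ^ 2) 1)
    (c' : Z → ℝ) (hc'_cont : Continuous c') (hc'_supp : HasCompactSupport c')
    (hc'_mem : ∀ z, c' z ∈ Set.Icc (0 : ℝ) 1)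
    (hc'_sum : ∀ z, HasSum (fun γ : Γ => c' (ρ z γ) ^ 2) 1)
    (U : Γ →* (H ≃ₗᵢ[ℂ] H))
    (π : X → (Z → ℂ) → (H →L[ℂ] H))
    (hπ_add : ∀ (x : X) (f g : Z → ℂ), Continuous f → HasCompactSupport f →
      Continuous g → HasCompactSupport g → π x (f + g) = π x f + π x g)
    (hπ_mul : ∀ (x : X) (f g : Z → ℂ), Continuous f → HasCompactSupport f →
      Continuous g → HasCompactSupport g → π x (f * g) = (π x f).comp (π x g))
    (hπ_star : ∀ (x : X) (f : Z → ℂ), Continuous f → HasCompactSupport f →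
      π x (fun z => (starRingEnd ℂ) (f z)) = ContinuousLinearMap.adjoint (π x f))
    (hπ_equiv : ∀ (γ : Γ) (x : X) (f : Z → ℂ) (v : H),
      π (γ • x) f v = U γ (π x (fun z => f (ρ z γ⁻¹)) (U γ⁻¹ v)))
    (hπ_sum' : ∀ (x : X) (v : H),
      HasSum (fun γ : Γ => π x (fun z => (c' (ρ z γ) : ℂ) ^ 2) v) v) :
    ∀ (ξ : X → Γ → H) (F : Finset Γ),
      (∀ (x : X) (γ : Γ), γ ∉ F → ξ x γ = 0) →
      (∀ γ : Γ, Continuous fun x => ξ x γ) →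
      ∀ (x : X) (γ : Γ),
        HasSum (fun μ : Γ =>
            π x (fun z => (c z : ℂ))
              (π x (fun z => (c' (ρ z μ) : ℂ))
                (U μ (π (μ⁻¹ • x) (fun z => (c' z : ℂ))
                  (avgP π U ρ c ξ (μ⁻¹ • x) (μ⁻¹ * γ))))))
          (mishAct π U ρ c ξ x γ) ∧
        π x (fun z => (c z : ℂ))
            (avgP π U ρ c'
              (fun x' γ' => π x' (fun z => (c' z : ℂ)) (avgP π U ρ c ξ x' γ')) x γ) =
          mishAct π U ρ c ξ x γ := by
  intro ξ F hξ _ x γ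
  have hcC : Continuous fun z => (c z : ℂ) := Complex.continuous_ofReal.comp hc_cont
  have hcS : HasCompactSupport fun z => (c z : ℂ) :=
    hc_supp.comp_left (g := ((↑) : ℝ → ℂ)) Complex.ofReal_zero
  have hc'S : HasCompactSupport fun z => (c' z : ℂ) :=
    hc'_supp.comp_left (g := ((↑) : ℝ → ℂ)) Complex.ofReal_zero
  have transC (ν : Γ) : Continuous fun z => (c (ρ z ν) : ℂ) := hcC.comp (hρ_cont ν)
  have transC' (ν : Γ) : Continuous fun z => (c' (ρ z ν) : ℂ) :=
    Complex.continuous_ofReal.comp (hc'_cont.comp (hρ_cont ν))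
  have transS (ν : Γ) : HasCompactSupport fun z => (c (ρ z ν) : ℂ) :=
    hasCompactSupport_comp_right_translation ρ hρ_one hρ_mul hρ_cont hcS ν
  have transS' (ν : Γ) : HasCompactSupport fun z => (c' (ρ z ν) : ℂ) :=
    hasCompactSupport_comp_right_translation ρ hρ_one hρ_mul hρ_cont hc'S ν
  have term_eq (μ : Γ) :
      π x (fun z => (c' (ρ z μ) : ℂ)) (U μ (π (μ⁻¹ • x) (fun z => (c' z : ℂ))
        (avgP π U ρ c ξ (μ⁻¹ • x) (μ⁻¹ * γ)))) =
      π x (fun z => (c' (ρ z μ) : ℂ) ^ 2) (avgP π U ρ c ξ x γ) := by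
    rw [unitary_apply_equivariant_family hρ_one hρ_mul hπ_equiv,
      unitary_apply_avgP hρ_one hρ_mul hπ_equiv, ← ContinuousLinearMap.comp_apply,
      ← hπ_mul x _ _ (transC' μ) (transS' μ) (transC' μ) (transS' μ)]
    simp only [pow_two]
    rfl
  have inner_sum := hπ_sum' x (avgP π U ρ c ξ x γ)
  have cut_avg : π x (fun z => (c z : ℂ)) (avgP π U ρ c ξ x γ) = mishAct π U ρ c ξ x γ := by
    have hfin : Summable fun μ : Γ =>
        π x (fun z => (c (ρ z μ) : ℂ)) (U μ (ξ (μ⁻¹ • x) (μ⁻¹ * γ))) := by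
      classical
      refine summable_of_ne_finset_zero (s := F.image fun δ => γ * δ⁻¹) fun μ hμ => ?_
      rw [hξ _ _ fun h => hμ (Finset.mem_image.2 ⟨_, h, by simp⟩)]
      simp
    unfold avgP mishAct
    rw [ContinuousLinearMap.map_tsum _ hfin]
    refine tsum_congr fun μ => ?_
    rw [← ContinuousLinearMap.comp_apply, ← hπ_mul x _ _ hcC hcS (transC μ) (transS μ)]
    rfl
  constructor
  · simp only [term_eq]
    rw [← cut_avg]
    exact inner_sum.mapL _
  · rw [← cut_avg]
    congr 1
    rw [avgP]
    simp only [term_eq]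
    exact inner_sum.tsum_eq
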